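/- Let A ∈ SL(2,ℤ). Then there exists exactly one finite sequence of integers (c_1,…,c_n) such that: (i) M(c_1,…,c_n) = ε·A for some ε ∈ {1,−1}; (ii) n is minimal, i.e. for every sequence (d_1,…,d_m) of integers with M(d_1,…,d_m) = ε'·A for some ε' ∈ {1,−1}, one has m ≥ n; and (iii) c_i ∉ {−2, −1, 0, 1} for all i with 2 ≤ i ≤ n−1. -/

import Mathlib

/-- The continuant matrix `M(c)` for an integer `c`. -/
def M (c : ℤ) : Matrix (Fin 2) (Fin 2) ℤ := !![c, -1; 1, 0]

/-- `M(c₁,…,cₙ) := M(c₁)·…·M(cₙ)`; the empty product is the identity matrix. -/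
def Mseq (l : List ℤ) : Matrix (Fin 2) (Fin 2) ℤ := (l.map M).prod

/-- Two sequences present the same matrix up to sign. -/
def EqvS (l k : List ℤ) : Prop := Mseq l = Mseq k ∨ Mseq l = - Mseq k

/-- `l` is of minimal length. -/
def MinS (l : List ℤ) : Prop := ∀ d, EqvS d l → l.length ≤ d.length

lemma Mseq_nil : Mseq [] = 1 := by simp [Mseq]

lemma Mseq_cons (c : ℤ) (l : List ℤ) : Mseq (c :: l) = M c * Mseq l := by simp [Mseq]

lemma Mseq_append (l l' : List ℤ) : Mseq (l ++ l') = Mseq l * Mseq l' := by simp [Mseq]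

lemma EqvS.symm {l l' : List ℤ} (h : EqvS l l') : EqvS l' l := by
  rcases h with h | h
  · exact Or.inl h.symm
  · right; rw [h, neg_neg]

lemma EqvS.trans {l l' m : List ℤ} (h : EqvS l l') (h' : EqvS l' m) : EqvS l m := by
  rcases h with h | h <;> rcases h' with h' | h' <;> simp [EqvS, h, h']

lemma EqvS.append_left {l l' : List ℤ} (p : List ℤ) (h : EqvS l l') :
    EqvS (p ++ l) (p ++ l') := by
  rcases h with h | h <;> simp [EqvS, Mseq_append, h]

lemma EqvS.append_right {l l' : List ℤ} (p : List ℤ) (h : EqvS l l') :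
    EqvS (l ++ p) (l' ++ p) := by
  rcases h with h | h <;> simp [EqvS, Mseq_append, h]

lemma EqvS.cons {l l' : List ℤ} (p : ℤ) (h : EqvS l l') : EqvS (p :: l) (p :: l') := by
  simpa using h.append_left [p]

lemma eqv_one (a b : ℤ) : EqvS [a, 1, b] [a - 1, b - 1] := by
  left
  ext i j
  fin_cases i <;> fin_cases j <;> simp [Mseq, M, Matrix.mul_apply, Fin.sum_univ_two] <;> ring

lemma eqv_neg_one (a b : ℤ) : EqvS [a, -1, b] [a + 1, b + 1] := by
  right
  ext i j
  fin_cases i <;> fin_cases j <;> simp [Mseq, M, Matrix.mul_apply, Fin.sum_univ_two] <;> ring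

lemma eqv_zero (a b : ℤ) : EqvS [a, 0, b] [a + b] := by
  right
  ext i j
  fin_cases i <;> fin_cases j <;> simp [Mseq, M, Matrix.mul_apply, Fin.sum_univ_two, add_comm]

lemma eqv_two (a b : ℤ) : EqvS [a, 2, b] [a - 1, -2, b - 1] := by
  right
  ext i j
  fin_cases i <;> fin_cases j <;> simp [Mseq, M, Matrix.mul_apply, Fin.sum_univ_two] <;> ring

lemma eqv_mid {u v : List ℤ} (h : EqvS u v) (p q : List ℤ) :
    EqvS (p ++ (u ++ q)) (p ++ (v ++ q)) := (h.append_right q).append_left p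

/-- The list starts with `3,…,3,2`. -/
def P32 : List ℤ → Prop
  | [] => False
  | c :: l => c = 2 ∨ (c = 3 ∧ P32 l)

/-- Reduced interior words. -/
def GoodS : List ℤ → Prop
  | [] => True
  | c :: l => (2 ≤ c ∨ c ≤ -3) ∧ (c = 2 → ¬ P32 l) ∧ GoodS l

lemma short_of_P32 (b : ℤ) : ∀ (l : List ℤ), P32 l → ∀ a : ℤ, ∃ l' : List ℤ,
    l'.length = l.length + 1 ∧ EqvS (a :: 2 :: (l ++ [b])) ((a - 1) :: l')
  | [], h => h.elim
  | c :: l, h => by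
    intro a
    rcases h with rfl | ⟨rfl, h⟩
    · obtain ⟨x, t, hx⟩ : ∃ x t, l ++ [b] = x :: t := by
        cases l <;> simp
      have hlen : l.length = t.length := by
        have := congrArg List.length hx
        simpa using this
      refine ⟨-3 :: (x - 1) :: t, by simp [hlen], ?_⟩
      have h1 := (eqv_two a 2).append_right (x :: t)
      have h2 := eqv_mid (eqv_one (-2) x) [a - 1] t
      rw [List.cons_append, hx]
      norm_num at h1 h2 ⊢
      exact h1.trans h2
    · obtain ⟨l', hl', he⟩ := short_of_P32 b l h (-2)
      refine ⟨-3 :: l', by simp [hl'], ?_⟩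
      have h1 := (eqv_two a 3).append_right (l ++ [b])
      have h2 := he.cons (a - 1)
      norm_num at h1 h2 ⊢
      exact h1.trans h2

lemma MinS.tail {c : ℤ} {l : List ℤ} (h : MinS (c :: l)) : MinS l := by
  intro d hd
  have := h (c :: d) (hd.cons c)
  simpa using this

lemma good_of_min (b : ℤ) : ∀ (l : List ℤ) (a : ℤ), MinS (a :: (l ++ [b])) →
    (∀ x ∈ l, 2 ≤ x ∨ x ≤ -3) → GoodS l
  | [], _, _, _ => trivial
  | c :: l, a, hm, hx => by
    refine ⟨hx c (by simp), ?_, ?_⟩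
    · rintro rfl hP
      obtain ⟨l', hl', he⟩ := short_of_P32 b l hP a
      have := hm _ he.symm
      simp [hl'] at this
    · exact good_of_min b l c hm.tail (fun x hxl => hx x (by simp [hxl]))

/-- Inverse of the continued fraction value. -/
noncomputable def RS : List ℤ → ℝ
  | [] => 0
  | c :: l => 1 / (c - RS l)

lemma RS_bounds (g : ℝ) (h0 : 3 / 5 < g) (h1 : g < 5 / 8) (hg : g ^ 2 = 1 - g) :
    ∀ l : List ℤ, GoodS l → (-(1 - g) < RS l ∧ RS l < g) ∧ (¬ P32 l → RS l < 1 - g)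
  | [], _ => by
    simp only [RS]
    refine ⟨⟨by linarith, by linarith⟩, fun _ => by linarith⟩
  | c :: l, h => by
    obtain ⟨hc, h2, hl⟩ := h
    obtain ⟨⟨ha, hb⟩, hp⟩ := RS_bounds g h0 h1 hg l hl
    simp only [RS]
    set r := RS l
    rcases hc with hc | hc
    · have hcr : (2 : ℝ) ≤ c := by exact_mod_cast hc
      have hpos : (0 : ℝ) < c - r := by linarith
      refine ⟨⟨?_, ?_⟩, ?_⟩
      · have : 0 < 1 / ((c : ℝ) - r) := by positivity
        linarith
      · rw [div_lt_iff₀ hpos]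
        rcases eq_or_lt_of_le hc with h | h
        · have := hp (h2 h.symm)
          rw [← h]; push_cast; nlinarith
        · have : (3 : ℝ) ≤ c := by exact_mod_cast h
          nlinarith
      · intro hn
        rw [div_lt_iff₀ hpos]
        simp only [P32, not_or, not_and] at hn
        rcases eq_or_lt_of_le (show 3 ≤ c by omega) with h | h
        · have := hp (hn.2 h.symm)
          rw [← h]; push_cast; nlinarith
        · have : (4 : ℝ) ≤ c := by exact_mod_cast h
          nlinarith
    · have hcr : (c : ℝ) ≤ -3 := by exact_mod_cast hc
      have hneg : (c : ℝ) - r < 0 := by linarith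
      have hn : 1 / ((c : ℝ) - r) < 0 := one_div_neg.mpr hneg
      refine ⟨⟨?_, by linarith⟩, fun _ => by linarith⟩
      rw [lt_div_iff_of_neg hneg]
      nlinarith

lemma exists_g : ∃ g : ℝ, 3 / 5 < g ∧ g < 5 / 8 ∧ g ^ 2 = 1 - g := by
  have h5 : √(5 : ℝ) ^ 2 = 5 := Real.sq_sqrt (by norm_num)
  have hp := Real.sqrt_nonneg (5 : ℝ)
  refine ⟨(√5 - 1) / 2, by nlinarith, by nlinarith, by nlinarith⟩

lemma head_eq {l l' : List ℤ} (h : GoodS l) (h' : GoodS l') {a a' : ℤ}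
    (he : (a : ℝ) - RS l = a' - RS l') : a = a' ∧ RS l = RS l' := by
  obtain ⟨g, g0, g1, g2⟩ := exists_g
  have b := (RS_bounds g g0 g1 g2 l h).1
  have b' := (RS_bounds g g0 g1 g2 l' h').1
  have u : (a : ℝ) < a' + 1 := by linarith
  have v : (a' : ℝ) < a + 1 := by linarith
  have u' : a < a' + 1 := by exact_mod_cast u
  have v' : a' < a + 1 := by exact_mod_cast v
  have e : a = a' := by omega
  subst e
  exact ⟨rfl, by linarith⟩

lemma den_ne {c : ℤ} {l : List ℤ} (h : GoodS (c :: l)) : (c : ℝ) - RS l ≠ 0 := by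
  obtain ⟨g, g0, g1, g2⟩ := exists_g
  obtain ⟨hc, -, hl⟩ := h
  have b := (RS_bounds g g0 g1 g2 l hl).1
  rcases hc with hc | hc
  · have hcr : (2 : ℝ) ≤ c := by exact_mod_cast hc
    intro h; linarith
  · have hcr : (c : ℝ) ≤ -3 := by exact_mod_cast hc
    intro h; linarith

lemma RS_inj : ∀ l l' : List ℤ, GoodS l → GoodS l' → RS l = RS l' → l = l'
  | [], [], _, _, _ => rfl
  | [], c :: l, _, h, e => by
    simp only [RS] at e
    exact absurd e.symm (one_div_ne_zero (den_ne h))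
  | c :: l, [], h, _, e => by
    simp only [RS] at e
    exact absurd e (one_div_ne_zero (den_ne h))
  | c :: l, c' :: l', h, h', e => by
    simp only [RS, one_div, inv_inj] at e
    obtain ⟨rfl, e'⟩ := head_eq h.2.2 h'.2.2 e
    rw [RS_inj l l' h.2.2 h'.2.2 e']

lemma Mseq_RS : ∀ l : List ℤ, GoodS l →
    Mseq l 0 0 ≠ 0 ∧ (Mseq l 1 0 : ℝ) = RS l * Mseq l 0 0
  | [], _ => by simp [Mseq_nil, RS]
  | c :: l, h => by
    obtain ⟨h0, h1⟩ := Mseq_RS l h.2.2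
    have hd := den_ne h
    have e0 : Mseq (c :: l) 0 0 = c * Mseq l 0 0 - Mseq l 1 0 := by
      simp [Mseq_cons, M, Matrix.mul_apply, Fin.sum_univ_two]; ring
    have e1 : Mseq (c :: l) 1 0 = Mseq l 0 0 := by
      simp [Mseq_cons, M, Matrix.mul_apply, Fin.sum_univ_two]
    have e0' : (Mseq (c :: l) 0 0 : ℝ) = (c - RS l) * Mseq l 0 0 := by
      rw [e0]; push_cast; rw [h1]; ring
    have h0' : (Mseq l 0 0 : ℝ) ≠ 0 := by exact_mod_cast h0
    refine ⟨?_, ?_⟩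
    · have : (Mseq (c :: l) 0 0 : ℝ) ≠ 0 := by rw [e0']; exact mul_ne_zero hd h0'
      exact_mod_cast this
    · rw [e0', e1]; simp only [RS]; field_simp

lemma M_det (c : ℤ) : (M c).det = 1 := by simp [M, Matrix.det_fin_two]

lemma Mseq_det (l : List ℤ) : (Mseq l).det = 1 := by
  induction l with
  | nil => simp [Mseq_nil]
  | cons c l ih => simp [Mseq_cons, M_det, ih]

lemma eqv_single {a b : ℤ} (h : EqvS [a] [b]) : a = b := by
  rcases h with h | h
  · have := congrFun (congrFun h 0) 0
    simpa [Mseq, M] using this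
  · have := congrFun (congrFun h 1) 0
    simp [Mseq, M] at this

lemma EqvS.cancel {p l l' : List ℤ} (h : EqvS (p ++ l) (p ++ l')) : EqvS l l' := by
  have hu : IsUnit (Mseq p) := by
    rw [Matrix.isUnit_iff_isUnit_det, Mseq_det]; exact isUnit_one
  rcases h with h | h
  · left
    rw [Mseq_append, Mseq_append] at h
    exact hu.mul_left_cancel h
  · right
    rw [Mseq_append, Mseq_append, ← mul_neg] at h
    exact hu.mul_left_cancel h

lemma unique_mid {a b a' b' : ℤ} {l l' : List ℤ} (h : GoodS l) (h' : GoodS l')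
    (he : EqvS (a :: (l ++ [b])) (a' :: (l' ++ [b']))) :
    a :: (l ++ [b]) = a' :: (l' ++ [b']) := by
  have c0 : ∀ (a b : ℤ) (l : List ℤ),
      Mseq (a :: (l ++ [b])) 0 1 = -(a * Mseq l 0 0 - Mseq l 1 0) := by
    intro a b l
    simp [Mseq_cons, Mseq_append, Mseq_nil, M, Matrix.mul_apply, Fin.sum_univ_two]; ring
  have c1 : ∀ (a b : ℤ) (l : List ℤ), Mseq (a :: (l ++ [b])) 1 1 = - Mseq l 0 0 := by
    intro a b l
    simp [Mseq_cons, Mseq_append, Mseq_nil, M, Matrix.mul_apply, Fin.sum_univ_two]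
  obtain ⟨n0, n1⟩ := Mseq_RS l h
  obtain ⟨n0', n1'⟩ := Mseq_RS l' h'
  have key : (a : ℝ) - RS l = a' - RS l' := by
    have hz : (Mseq l 0 0 : ℝ) ≠ 0 := by exact_mod_cast n0
    rcases he with he | he
    · have e0 := congrFun (congrFun he 0) 1
      have e1 := congrFun (congrFun he 1) 1
      rw [c0, c0] at e0
      rw [c1, c1] at e1
      have e0' : -((a : ℝ) * Mseq l 0 0 - Mseq l 1 0) = -(a' * Mseq l' 0 0 - Mseq l' 1 0) := by
        exact_mod_cast e0
      have e1' : (Mseq l' 0 0 : ℝ) = Mseq l 0 0 := by exact_mod_cast (neg_injective e1).symm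
      rw [n1, n1', e1'] at e0'
      apply mul_right_cancel₀ hz
      linarith
    · have e0 := congrFun (congrFun he 0) 1
      have e1 := congrFun (congrFun he 1) 1
      rw [Matrix.neg_apply, c0, c0] at e0
      rw [Matrix.neg_apply, c1, c1] at e1
      have e0' : -((a : ℝ) * Mseq l 0 0 - Mseq l 1 0)
          = - -(a' * Mseq l' 0 0 - Mseq l' 1 0) := by
        exact_mod_cast e0
      have e1'' : Mseq l' 0 0 = - Mseq l 0 0 := by omega
      have e1' : (Mseq l' 0 0 : ℝ) = - Mseq l 0 0 := by exact_mod_cast e1''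
      rw [n1, n1', e1'] at e0'
      apply mul_right_cancel₀ hz
      linarith
  obtain ⟨rfl, e⟩ := head_eq h h' key
  have e2 := RS_inj l l' h h' e
  subst e2
  have : EqvS ((a :: l) ++ [b]) ((a :: l) ++ [b']) := he
  rw [eqv_single this.cancel]

lemma exists_pres : ∀ (n : ℕ) (A : Matrix (Fin 2) (Fin 2) ℤ), A.det = 1 → (A 1 0).natAbs ≤ n →
    ∃ l, Mseq l = A ∨ Mseq l = -A := by
  intro n
  induction n with
  | zero =>
    intro A hA h
    have hz : A 1 0 = 0 := by omega
    rw [Matrix.det_fin_two, hz, mul_zero, sub_zero] at hA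
    rcases Int.eq_one_or_neg_one_of_mul_eq_one' hA with ⟨h1, h2⟩ | ⟨h1, h2⟩
    · refine ⟨[A 0 1, 0], Or.inr ?_⟩
      ext i j
      fin_cases i <;> fin_cases j <;>
        simp [Mseq, M, Matrix.mul_apply, Fin.sum_univ_two, h1, h2, hz]
    · refine ⟨[-A 0 1, 0], Or.inl ?_⟩
      ext i j
      fin_cases i <;> fin_cases j <;>
        simp [Mseq, M, Matrix.mul_apply, Fin.sum_univ_two, h1, h2, hz]
  | succ n ih =>
    intro A hA h
    by_cases hz : A 1 0 = 0
    · exact ih A hA (by simp [hz])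
    · set q := A 0 0 / A 1 0 with hq
      let B : Matrix (Fin 2) (Fin 2) ℤ := !![A 1 0, A 1 1; -A 0 0 + q * A 1 0, -A 0 1 + q * A 1 1]
      have hB : M q * B = A := by
        ext i j
        fin_cases i <;> fin_cases j <;>
          simp [B, M, Matrix.mul_apply, Fin.sum_univ_two]
      have hBd : B.det = 1 := by
        rw [← hB, Matrix.det_mul, M_det, one_mul] at hA
        exact hA
      have hlt : (B 1 0).natAbs ≤ n := by
        have e : B 1 0 = -(A 0 0 % A 1 0) := by
          have := Int.emod_add_mul_ediv (A 0 0) (A 1 0)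
          have e' : B 1 0 = -A 0 0 + q * A 1 0 := rfl
          rw [e', hq]
          linarith
        have h1 := Int.emod_nonneg (A 0 0) hz
        have h2 := Int.emod_lt_abs (A 0 0) hz
        rw [Int.abs_eq_natAbs] at h2
        rw [e, Int.natAbs_neg]
        generalize A 0 0 % A 1 0 = r at *
        omega
      obtain ⟨l, hl⟩ := ih B hBd hlt
      refine ⟨q :: l, ?_⟩
      rw [Mseq_cons]
      rcases hl with hl | hl <;> simp [hl, hB]

/-- Sum of the negative parts. -/
def negS (l : List ℤ) : ℕ := (l.map fun c => (-c).toNat).sum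

lemma decomp : ∀ (i : ℕ) (l : List ℤ), i + 2 < l.length →
    ∃ p a b q, l = p ++ a :: l.getD (i + 1) 0 :: b :: q
  | 0, a :: c :: b :: q, _ => ⟨[], a, b, q, by simp⟩
  | i + 1, x :: l, h => by
    obtain ⟨p, a, b, q, e⟩ := decomp i l (by simp at h; omega)
    refine ⟨x :: p, a, b, q, ?_⟩
    rw [List.getD_cons_succ, List.cons_append, ← e]

/-- Condition (iii). -/
def IntS (c : List ℤ) : Prop := ∀ i, 1 ≤ i → i + 1 < c.length →
        c.getD i 0 ≠ -2 ∧ c.getD i 0 ≠ -1 ∧ c.getD i 0 ≠ 0 ∧ c.getD i 0 ≠ 1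

lemma exists_int : ∀ (k : ℕ) (l : List ℤ), negS l ≤ k → MinS l →
    ∃ l', EqvS l' l ∧ l'.length = l.length ∧ IntS l' := by
  intro k
  induction k using Nat.strong_induction_on with
  | _ k ih =>
    intro l hk hm
    by_cases hI : IntS l
    · exact ⟨l, Or.inl rfl, rfl, hI⟩
    unfold IntS at hI
    push Not at hI
    obtain ⟨i, hi1, hi2, hi⟩ := hI
    obtain ⟨j, rfl⟩ : ∃ j, i = j + 1 := ⟨i - 1, by omega⟩
    obtain ⟨p, a, b, q, e⟩ := decomp j l (by omega)
    generalize l.getD (j + 1) 0 = c at hi e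
    subst e
    have hc : c = -2 ∨ c = -1 ∨ c = 0 ∨ c = 1 := by tauto
    rcases hc with rfl | rfl | rfl | rfl
    · have h := eqv_mid (eqv_two (a + 1) (b + 1)) p q
      simp only [add_sub_cancel_right, List.cons_append, List.nil_append] at h
      have hm' : MinS (p ++ (a + 1) :: 2 :: (b + 1) :: q) := by
        intro d hd
        have := hm d (hd.trans h)
        simpa using this
      have hlt : negS (p ++ (a + 1) :: 2 :: (b + 1) :: q) < k := by
        refine lt_of_lt_of_le ?_ hk
        simp [negS]
        omega
      obtain ⟨l', h1, h2, h3⟩ := ih _ hlt _ le_rfl hm'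
      exact ⟨l', h1.trans h, by simpa using h2, h3⟩
    · have h := eqv_mid (eqv_neg_one a b) p q
      have := hm _ h.symm
      simp at this
    · have h := eqv_mid (eqv_zero a b) p q
      have := hm _ h.symm
      simp at this
    · have h := eqv_mid (eqv_one a b) p q
      have := hm _ h.symm
      simp at this

lemma unique_all {c d : List ℤ} (hc : MinS c) (hd : MinS d) (h : EqvS c d)
    (ic : IntS c) (id : IntS d) : c = d := by
  have hlen : c.length = d.length := le_antisymm (hc d h.symm) (hd c h)
  have key : ∀ (a b : ℤ) (l : List ℤ), MinS (a :: (l ++ [b])) → IntS (a :: (l ++ [b])) →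
      GoodS l := by
    intro a b l hm hi
    refine good_of_min b l a hm ?_
    intro x hx
    obtain ⟨j, hj, rfl⟩ := List.getElem_of_mem hx
    have := hi (j + 1) (by omega) (by simp; omega)
    rw [List.getD_cons_succ, List.getD_append _ _ _ _ hj, List.getD_eq_getElem _ _ hj] at this
    omega
  have split : ∀ (x y : ℤ) (l : List ℤ), ∃ t b, x :: y :: l = x :: (t ++ [b]) := by
    intro x y l
    exact ⟨(y :: l).dropLast, (y :: l).getLast (by simp), by
      rw [List.dropLast_append_getLast]⟩
  match c, d, hlen with
  | [], [], _ => rfl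
  | [a], [b], _ => rw [eqv_single h]
  | x :: y :: l, x' :: y' :: l', _ =>
    obtain ⟨t, b, e⟩ := split x y l
    obtain ⟨t', b', e'⟩ := split x' y' l'
    rw [e] at hc h ic ⊢
    rw [e'] at hd h id ⊢
    exact unique_mid (key _ _ _ hc ic) (key _ _ _ hd id) h

/-- For every `A ∈ SL(2,ℤ)` there is exactly one sequence `(c₁,…,cₙ)` of integers such
that (i) `M(c₁,…,cₙ) = ε·A` for some `ε ∈ {1,−1}`, (ii) `n` is minimal among all such
presentations up to sign, and (iii) `cᵢ ∉ {−2,−1,0,1}` for all `2 ≤ i ≤ n−1`. -/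
theorem minimal_presentation_existsUnique (A : Matrix (Fin 2) (Fin 2) ℤ) (hA : A.det = 1) :
    ∃! c : List ℤ,
      (∃ ε : ℤ, (ε = 1 ∨ ε = -1) ∧ Mseq c = ε • A) ∧
      (∀ d : List ℤ, (∃ ε' : ℤ, (ε' = 1 ∨ ε' = -1) ∧ Mseq d = ε' • A) →
        c.length ≤ d.length) ∧
      (∀ i, 1 ≤ i → i + 1 < c.length →
        c.getD i 0 ≠ -2 ∧ c.getD i 0 ≠ -1 ∧ c.getD i 0 ≠ 0 ∧ c.getD i 0 ≠ 1) := by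
  have sgn : ∀ c : List ℤ, (∃ ε : ℤ, (ε = 1 ∨ ε = -1) ∧ Mseq c = ε • A) ↔
      (Mseq c = A ∨ Mseq c = -A) := by
    intro c
    constructor
    · rintro ⟨ε, rfl | rfl, h⟩
      · left; simpa using h
      · right; simpa using h
    · rintro (h | h)
      · exact ⟨1, Or.inl rfl, by simpa using h⟩
      · exact ⟨-1, Or.inr rfl, by simpa using h⟩
  simp only [sgn]
  have tr : ∀ c d : List ℤ, (Mseq c = A ∨ Mseq c = -A) →
      (EqvS d c ↔ (Mseq d = A ∨ Mseq d = -A)) := by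
    rintro c d (h | h)
    · simp [EqvS, h]
    · simp only [EqvS, h, neg_neg]
      exact or_comm
  obtain ⟨l₀, hl₀⟩ := exists_pres _ A hA le_rfl
  classical
  have hex : ∃ n, ∃ l : List ℤ, l.length = n ∧ (Mseq l = A ∨ Mseq l = -A) := ⟨_, l₀, rfl, hl₀⟩
  obtain ⟨l, hl, hlA⟩ := Nat.find_spec hex
  have hm : MinS l := by
    intro d hd
    rw [hl]
    exact Nat.find_min' hex ⟨d, rfl, (tr l d hlA).1 hd⟩
  obtain ⟨c, h1, h2, h3⟩ := exists_int _ l le_rfl hm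
  have hcA := (tr l c hlA).1 h1
  have hcm : MinS c := fun d hd => by rw [h2]; exact hm d (hd.trans h1)
  refine ⟨c, ⟨hcA, fun d hd => hcm d ((tr c d hcA).2 hd), h3⟩, ?_⟩
  rintro d ⟨hdA, hdm, hdi⟩
  exact unique_all (fun e he => hdm e ((tr d e hdA).1 he)) hcm ((tr c d hcA).2 hdA) hdi h3
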